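/- Let N ≥ 1 be an integer, η ∈ ℂ∖{0}, and suppose ξ_1,…,ξ_N ∈ ℂ satisfy the genericity condition (G). Let ζ₊, ζ₋ ∈ ℂ with ξ_n ≠ ζ₊ and ξ_n ≠ ζ₋ for all n, set s := (ζ₊+ζ₋)/η, and assume neither s nor s + N − n_α − n_β is a nonpositive integer. Let α(λ) = ∏_{k=1}^{n_α}(λ² − α_k²) and β(λ) = ∏_{k=1}^{n_β}(λ² − β_k²), where all α_k, β_k are nonzero, the n_α + n_β squares α_1²,…,α_{n_α}², β_1²,…,β_{n_β}² are pairwise distinct, and none of them equals any (ξ_n^{(h)})². Then det_{1≤i,j≤N}[ α(ξ_i^{(0)})β(ξ_i^{(0)})(ξ_i^{(0)})^{2(j−1)} + f_i g_i α(ξ_i^{(1)})β(ξ_i^{(1)})(ξ_i^{(1)})^{2(j−1)} ] = V̂(ξ_1,…,ξ_N) · (V̂(ξ_1^{(0)},…,ξ_N^{(0)})/V̂(ξ_1^{(1)},…,ξ_N^{(1)})) · ∏_{n=1}^N [ξ_n/((ξ_n−ζ₋)(ζ₊−ξ_n))] · (2η)^{N−n_α−n_β} · (Γ(s+N−n_α−n_β)/Γ(s))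 · A_{{α}∪{β}}[Ã_{ζ₊,ζ₋}], where A_{{α}∪{β}} is taken over the n_α+n_β points α_1,…,α_{n_α},β_1,…,β_{n_β} and Γ is the complex Gamma function. -/

import Mathlib

open Finset

/-- Bulk function `a(λ) = ∏ (λ - ξ_n + η/2)`. -/
noncomputable def aF (N : ℕ) (η : ℂ) (ξ : Fin N → ℂ) (lam : ℂ) : ℂ :=
  ∏ n, (lam - ξ n + η / 2)

/-- Bulk function `d(λ) = ∏ (λ - ξ_n - η/2)`. -/
noncomputable def dF (N : ℕ) (η : ℂ) (ξ : Fin N → ℂ) (lam : ℂ) : ℂ :=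
  ∏ n, (lam - ξ n - η / 2)

/-- Genericity condition (G) on the inhomogeneity parameters. -/
def GenG (N : ℕ) (η : ℂ) (ξ : Fin N → ℂ) : Prop :=
  (∀ j, ξ j ≠ 0 ∧ ξ j ≠ η ∧ ξ j ≠ -η) ∧
  ∀ j k, j ≠ k →
    ξ j + ξ k ≠ 0 ∧ ξ j + ξ k ≠ η ∧ ξ j + ξ k ≠ -η ∧
    ξ j - ξ k ≠ 0 ∧ ξ j - ξ k ≠ η ∧ ξ j - ξ k ≠ -η

/-- `V̂(u_1,…,u_L) = ∏_{j<k}(u_k² − u_j²)`. -/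
noncomputable def Vhat {L : ℕ} (u : Fin L → ℂ) : ℂ :=
  ∏ j, ∏ k ∈ Finset.Ioi j, (u k ^ 2 - u j ^ 2)

/-- `f_n = −∏_{a≠n} ((ξ_n−ξ_a+η)(ξ_n+ξ_a+η))/((ξ_n−ξ_a−η)(ξ_n+ξ_a−η))`. -/
noncomputable def fC (N : ℕ) (η : ℂ) (ξ : Fin N → ℂ) (n : Fin N) : ℂ :=
  -∏ a ∈ Finset.univ.erase n,
      ((ξ n - ξ a + η) * (ξ n + ξ a + η)) / ((ξ n - ξ a - η) * (ξ n + ξ a - η))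

/-- `g_n = ((ξ_n+ζ₊)(ξ_n+ζ₋))/((ξ_n−ζ₊)(ξ_n−ζ₋))`. -/
noncomputable def gC (N : ℕ) (ζp ζm : ℂ) (ξ : Fin N → ℂ) (n : Fin N) : ℂ :=
  ((ξ n + ζp) * (ξ n + ζm)) / ((ξ n - ζp) * (ξ n - ζm))

/-- `A_{{x}}[f]` as a ratio of determinants. -/
noncomputable def Afun {L : ℕ} (η : ℂ) (x : Fin L → ℂ) (f : ℂ → ℂ) : ℂ :=
  Matrix.det (Matrix.of fun i j : Fin L =>
      f (x i) * (x i + η / 2) ^ (2 * (j : ℕ)) + f (-x i) * (x i - η / 2) ^ (2 * (j : ℕ)))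
    / Matrix.det (Matrix.of fun i j : Fin L => x i ^ (2 * (j : ℕ)))

/-- `Ã_{ζ,ζ'}(μ) = ((−μ−η/2+ζ)(−μ−η/2+ζ')/(−μ)) a(−μ) d(μ)`. -/
noncomputable def Atil (N : ℕ) (η : ℂ) (ξ : Fin N → ℂ) (ζ ζ' μ : ℂ) : ℂ :=
  ((-μ - η / 2 + ζ) * (-μ - η / 2 + ζ') / (-μ)) * aF N η ξ (-μ) * dF N η ξ μ

section Helpers
open Polynomial

/-- first enumeration of the monomial degrees -/
def en1 (N M : ℕ) : Fin M ⊕ Fin N ≃ Fin (M + N) := finSumFinEquiv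

/-- second enumeration of the monomial degrees -/
def en2 (N M : ℕ) : Fin M ⊕ Fin N ≃ Fin (M + N) :=
  ((Equiv.sumComm _ _).trans finSumFinEquiv).trans (finCongr (add_comm N M))

/-- the sign of the block transposition -/
def epsS (N M : ℕ) : ℂ :=
  ((Equiv.Perm.sign ((en2 N M).trans (en1 N M).symm) : ℤˣ) : ℤ)

lemma en1_inl (N M : ℕ) (j : Fin M) : ((en1 N M (Sum.inl j) : Fin _) : ℕ) = j := by
  simp [en1]
lemma en1_inr (N M : ℕ) (j : Fin N) : ((en1 N M (Sum.inr j) : Fin _) : ℕ) = M + j := by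
  simp [en1]
lemma en2_inl (N M : ℕ) (j : Fin M) : ((en2 N M (Sum.inl j) : Fin _) : ℕ) = N + j := by
  simp [en2, add_comm]
lemma en2_inr (N M : ℕ) (j : Fin N) : ((en2 N M (Sum.inr j) : Fin _) : ℕ) = j := by
  simp [en2]

lemma lin_expand {ι : Type*} [Fintype ι] {n : ℕ} (e : ι ≃ Fin n) (φ : ℂ[X] →ₗ[ℂ] ℂ) (q : ℂ[X])
    (hq : q.natDegree < n) : φ q = ∑ r, φ (X ^ ((e r : Fin n) : ℕ)) * q.coeff (e r : Fin n) := by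
  rw [Equiv.sum_comp e (fun k : Fin n => φ (X ^ (k : ℕ)) * q.coeff k)]
  conv_lhs => rw [q.as_sum_range' n hq, map_sum, Finset.sum_range]
  refine Finset.sum_congr rfl fun k _ => ?_
  rw [← C_mul_X_pow_eq_monomial, ← smul_eq_C_mul, map_smul, smul_eq_mul, mul_comm]

lemma natDegree_prodX {M : ℕ} (y : Fin M → ℂ) :
    (∏ k, (X - C (y k))).natDegree = M := by
  rw [natDegree_prod_of_monic _ _ (fun _ _ => monic_X_sub_C _)]
  simp

lemma monic_prodX {M : ℕ} (y : Fin M → ℂ) :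
    (∏ k, (X - C (y k))).Monic := monic_prod_of_monic _ _ (fun _ _ => monic_X_sub_C _)

lemma det_tri {M : ℕ} (A : Matrix (Fin M) (Fin M) ℂ) (h : ∀ i j, j < i → A i j = 0) :
    A.det = ∏ i, A i i := by
  apply Matrix.det_of_isUpperTriangular
  intro i j hij
  exact h i j hij

lemma key0 (N M : ℕ) (ℓ : Fin N → ℂ[X] →ₗ[ℂ] ℂ) (y : Fin M → ℂ) (S : Fin M → ℂ[X])
    (δ : Fin M → ℂ) (hdeg : ∀ m, (S m).natDegree ≤ N + m) (hδ : ∀ m, (S m).coeff (N + m) = δ m)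
    (hker : ∀ i m, ℓ i (S m) = 0) :
    epsS N M * (Matrix.vandermonde y).det
      * (Matrix.of fun i j : Fin N => ℓ i ((∏ k, (X - C (y k))) * X ^ (j : ℕ))).det * ∏ m, δ m
    = (Matrix.of fun i m : Fin M => (S m).eval (y i)).det
      * (Matrix.of fun i j : Fin N => ℓ i (X ^ (j : ℕ))).det := by
  classical
  set P : ℂ[X] := ∏ k, (X - C (y k)) with hP
  have hPd : P.natDegree = M := natDegree_prodX y
  have hPm : P.Monic := monic_prodX y
  let Φ : Fin M ⊕ Fin N → (ℂ[X] →ₗ[ℂ] ℂ) := Sum.elim (fun i => leval (y i)) ℓ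
  let b1 : Fin M ⊕ Fin N → ℂ[X] := Sum.elim (fun j => X ^ (j : ℕ)) (fun j => P * X ^ (j : ℕ))
  let b2 : Fin M ⊕ Fin N → ℂ[X] := Sum.elim S (fun j => X ^ (j : ℕ))
  have hb1 : ∀ c, (b1 c).natDegree < M + N := by
    rintro (j | j)
    · simp only [b1, Sum.elim_inl, natDegree_X_pow]; omega
    · simp only [b1, Sum.elim_inr]
      rw [hPm.natDegree_mul (monic_X_pow _), hPd, natDegree_X_pow]; omega
  have hb2 : ∀ c, (b2 c).natDegree < M + N := by
    rintro (j | j)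
    · simp only [b2, Sum.elim_inl]; have := hdeg j; omega
    · simp only [b2, Sum.elim_inr, natDegree_X_pow]; omega
  let L1 : Matrix (Fin M ⊕ Fin N) (Fin M ⊕ Fin N) ℂ :=
    Matrix.of fun r c => Φ r (X ^ ((en1 N M c : Fin _) : ℕ))
  let L2 : Matrix (Fin M ⊕ Fin N) (Fin M ⊕ Fin N) ℂ :=
    Matrix.of fun r c => Φ r (X ^ ((en2 N M c : Fin _) : ℕ))
  let C1 : Matrix (Fin M ⊕ Fin N) (Fin M ⊕ Fin N) ℂ :=
    Matrix.of fun r c => (b1 c).coeff (en1 N M r : Fin _)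
  let C2 : Matrix (Fin M ⊕ Fin N) (Fin M ⊕ Fin N) ℂ :=
    Matrix.of fun r c => (b2 c).coeff (en2 N M r : Fin _)
  have hL : L2.det = epsS N M * L1.det := by
    have : L2 = L1.submatrix id ((en2 N M).trans (en1 N M).symm) := by
      ext r c
      simp [L1, L2]
    rw [this, Matrix.det_permute']
    rfl
  have h1 : L1 * C1 = Matrix.of fun r c => Φ r (b1 c) := by
    ext r c
    rw [Matrix.mul_apply, Matrix.of_apply, lin_expand (en1 N M) (Φ r) (b1 c) (hb1 c)]
    rfl
  have h2 : L2 * C2 = Matrix.of fun r c => Φ r (b2 c) := by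
    ext r c
    rw [Matrix.mul_apply, Matrix.of_apply, lin_expand (en2 N M) (Φ r) (b2 c) (hb2 c)]
    rfl
  have hC1 : C1.det = 1 := by
    have : C1 = Matrix.fromBlocks 1 (C1.toBlocks₁₂) 0
        (Matrix.of fun i j : Fin N => (P * X ^ (j : ℕ)).coeff (M + i)) := by
      ext (i | i) (j | j)
      · simp [C1, b1, en1_inl, coeff_X_pow, Matrix.one_apply, Fin.ext_iff]
      · simp [Matrix.toBlocks₁₂]
      · have : M + (i : ℕ) ≠ j := by omega
        simp [C1, b1, en1_inr, coeff_X_pow, this]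
      · simp [C1, b1, en1_inr]
    rw [this, Matrix.det_fromBlocks_zero₂₁, Matrix.det_one, one_mul, det_tri]
    · refine Finset.prod_eq_one fun i _ => ?_
      rw [Matrix.of_apply, coeff_mul_X_pow, ← hPd]
      exact hPm
    · intro i j hij
      rw [Matrix.of_apply]
      apply coeff_eq_zero_of_natDegree_lt
      rw [hPm.natDegree_mul (monic_X_pow _), hPd, natDegree_X_pow]
      have : (j : ℕ) < i := hij
      omega
  have hC2 : C2.det = ∏ m, δ m := by
    have : C2 = Matrix.fromBlocks (Matrix.of fun i j : Fin M => (S j).coeff (N + i)) 0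
        (C2.toBlocks₂₁) 1 := by
      ext (i | i) (j | j)
      · simp [C2, b2, en2_inl]
      · have : N + (i : ℕ) ≠ j := by omega
        simp [C2, b2, en2_inl, coeff_X_pow, this]
      · simp [Matrix.toBlocks₂₁]
      · simp [C2, b2, en2_inr, coeff_X_pow, Matrix.one_apply, Fin.ext_iff]
    rw [this, Matrix.det_fromBlocks_zero₁₂, Matrix.det_one, mul_one, det_tri]
    · exact Finset.prod_congr rfl fun i _ => hδ i
    · intro i j hij
      rw [Matrix.of_apply]
      apply coeff_eq_zero_of_natDegree_lt
      have : (j : ℕ) < i := hij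
      have := hdeg j
      omega
  have hD1 : (Matrix.of fun r c => Φ r (b1 c)).det = (Matrix.vandermonde y).det *
      (Matrix.of fun i j : Fin N => ℓ i (P * X ^ (j : ℕ))).det := by
    have : (Matrix.of fun r c => Φ r (b1 c)) = Matrix.fromBlocks (Matrix.vandermonde y) 0
        (Matrix.of fun r c => ℓ r (X ^ (c : ℕ)))
        (Matrix.of fun i j : Fin N => ℓ i (P * X ^ (j : ℕ))) := by
      ext (i | i) (j | j)
      · simp [Φ, b1, Matrix.vandermonde_apply]
      · have : P.eval (y i) = 0 := by
          rw [hP, eval_prod]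
          exact Finset.prod_eq_zero (Finset.mem_univ i) (by simp)
        simp [Φ, b1, this]
      · simp [Φ, b1]
      · simp [Φ, b1]
    rw [this, Matrix.det_fromBlocks_zero₁₂]
  have hD2 : (Matrix.of fun r c => Φ r (b2 c)).det =
      (Matrix.of fun i m : Fin M => (S m).eval (y i)).det
      * (Matrix.of fun i j : Fin N => ℓ i (X ^ (j : ℕ))).det := by
    have : (Matrix.of fun r c => Φ r (b2 c)) = Matrix.fromBlocks
        (Matrix.of fun i m : Fin M => (S m).eval (y i))
        (Matrix.of fun (r : Fin M) (c : Fin N) => (y r) ^ (c : ℕ)) 0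
        (Matrix.of fun i j : Fin N => ℓ i (X ^ (j : ℕ))) := by
      ext (i | i) (j | j)
      · simp [Φ, b2]
      · simp [Φ, b2]
      · simp [Φ, b2, hker]
      · simp [Φ, b2]
    rw [this, Matrix.det_fromBlocks_zero₂₁]
  have e1 := congrArg Matrix.det h1
  have e2 := congrArg Matrix.det h2
  rw [Matrix.det_mul, hC1, mul_one, hD1] at e1
  rw [Matrix.det_mul, hC2, hL, hD2, e1] at e2
  rw [← e2]; ring

lemma epsS_eq (N M : ℕ) : epsS N M = (-1) ^ (N * M) := by
  let y : Fin M → ℂ := fun i => (i : ℕ)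
  let z : Fin N → ℂ := fun i => ((M + i : ℕ) : ℂ)
  have hy : Function.Injective y := fun i j h => Fin.ext (by simpa [y] using h)
  have hz : Function.Injective z := fun i j h => Fin.ext (by
    have : M + (i : ℕ) = M + j := by simp only [z] at h; exact_mod_cast h
    omega)
  have hyz : ∀ i j, z i - y j ≠ 0 := by
    intro i j h
    rw [sub_eq_zero] at h
    have : M + (i : ℕ) = j := by simp only [z, y] at h; exact_mod_cast h
    omega
  have hk := key0 N M (fun i => leval (z i)) y
    (fun m => (∏ k, (X - C (z k))) * X ^ (m : ℕ)) (fun _ => 1)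
    (fun m => by
      rw [(monic_prodX z).natDegree_mul (monic_X_pow _), natDegree_prodX, natDegree_X_pow])
    (fun m => by
      rw [coeff_mul_X_pow]
      have := monic_prodX z
      rwa [Monic, leadingCoeff, natDegree_prodX] at this)
    (fun i m => by
      rw [leval_apply, eval_mul, eval_prod,
        Finset.prod_eq_zero (Finset.mem_univ i) (by simp), zero_mul])
  have a1 : (Matrix.of fun i j : Fin N => leval (z i) ((∏ k, (X - C (y k))) * X ^ (j : ℕ))).det
      = (∏ i, ∏ k, (z i - y k)) * (Matrix.vandermonde z).det := by
    rw [← Matrix.det_mul_column]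
    congr 1
    ext i j
    simp [eval_prod, Matrix.vandermonde_apply]
  have a2 : (Matrix.of fun i m : Fin M => ((∏ k, (X - C (z k))) * X ^ (m : ℕ)).eval (y i)).det
      = (∏ i, ∏ k, (y i - z k)) * (Matrix.vandermonde y).det := by
    rw [← Matrix.det_mul_column]
    congr 1
    ext i j
    simp [eval_prod, Matrix.vandermonde_apply]
  have a3 : (Matrix.of fun i j : Fin N => leval (z i) (X ^ (j : ℕ))).det
      = (Matrix.vandermonde z).det := by
    congr 1
    ext i j
    simp [Matrix.vandermonde_apply]
  have a4 : (∏ i, ∏ k, (y i - z k)) = (-1) ^ (N * M) * (∏ i, ∏ k, (z i - y k)) := by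
    rw [Finset.prod_comm]
    have : ∀ i k, y i - z k = (-1) * (z k - y i) := fun i k => by ring
    simp only [this, Finset.prod_mul_distrib]
    simp [pow_mul']
  rw [a1, a2, a3, a4] at hk
  have n1 : (Matrix.vandermonde y).det ≠ 0 := Matrix.det_vandermonde_ne_zero_iff.2 hy
  have n2 : (Matrix.vandermonde z).det ≠ 0 := Matrix.det_vandermonde_ne_zero_iff.2 hz
  have n3 : (∏ i, ∏ k, (z i - y k)) ≠ 0 :=
    Finset.prod_ne_zero_iff.2 fun i _ => Finset.prod_ne_zero_iff.2 fun k _ => hyz i k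
  apply mul_right_cancel₀ (mul_ne_zero (mul_ne_zero n1 n2) n3)
  simp only [Finset.prod_const_one, mul_one] at hk
  linear_combination hk

/-- odd part: `F(λ) - F(-λ) = 2 λ (oddP F)(λ²)` -/
noncomputable def oddP (F : ℂ[X]) : ℂ[X] := contract 2 (divX F)

lemma oddP_coeff (F : ℂ[X]) (n : ℕ) : (oddP F).coeff n = F.coeff (2 * n + 1) := by
  rw [oddP, coeff_contract two_ne_zero, coeff_divX, mul_comm]

lemma oddP_eval (F : ℂ[X]) (t : ℂ) : F.eval t - F.eval (-t) = 2 * t * (oddP F).eval (t ^ 2) := by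
  induction F using Polynomial.induction_on' with
  | add p q hp hq =>
    have : oddP (p + q) = oddP p + oddP q := by
      ext n; simp [oddP_coeff]
    rw [this]; simp only [eval_add]
    linear_combination hp + hq
  | monomial n a =>
    rcases Nat.even_or_odd' n with ⟨k, rfl | rfl⟩
    · have : oddP (monomial (2 * k) a) = 0 := by
        ext n; rw [oddP_coeff, coeff_monomial, if_neg (by omega), coeff_zero]
      rw [this]; simp [pow_mul]
    · have : oddP (monomial (2 * k + 1) a) = monomial k a := by
        ext n; rw [oddP_coeff, coeff_monomial, coeff_monomial]
        congr 1; apply propext; omega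
      rw [this]; simp only [eval_monomial, pow_succ (n := 2 * k), pow_mul, neg_sq]
      ring

lemma oddP_factor (R : ℂ[X]) (a : ℂ) :
    (oddP ((X - C a) * R)).eval (a ^ 2) = R.eval (-a) := by
  by_cases ha : a = 0
  · subst ha
    rw [zero_pow two_ne_zero, ← coeff_zero_eq_eval_zero, oddP_coeff]
    simp [coeff_zero_eq_eval_zero]
  · have := oddP_eval ((X - C a) * R) a
    simp only [eval_mul, eval_sub, eval_X, eval_C, sub_self, zero_mul] at this
    have h2 : (2 * a) ≠ 0 := mul_ne_zero two_ne_zero ha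
    apply mul_left_cancel₀ h2
    linear_combination -this

/-- the polynomial whose odd part gives the difference operator -/
noncomputable def Fp (N : ℕ) (η : ℂ) (ξ : Fin N → ℂ) (ζ ζ' : ℂ) (m : ℕ) : ℂ[X] :=
  (X + C (ζ - η / 2)) * (X + C (ζ' - η / 2))
    * (∏ n, ((X + C (η / 2 - ξ n)) * (X + C (η / 2 + ξ n)))) * (X + C (-(η / 2))) ^ (2 * m)

lemma Fp_monic (N : ℕ) (η : ℂ) (ξ : Fin N → ℂ) (ζ ζ' : ℂ) (m : ℕ) : (Fp N η ξ ζ ζ' m).Monic := by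
  unfold Fp
  refine (((monic_X_add_C _).mul (monic_X_add_C _)).mul (monic_prod_of_monic _ _ fun i _ =>
    (monic_X_add_C _).mul (monic_X_add_C _))).mul ((monic_X_add_C _).pow _)

lemma Fp_deg (N : ℕ) (η : ℂ) (ξ : Fin N → ℂ) (ζ ζ' : ℂ) (m : ℕ) :
    (Fp N η ξ ζ ζ' m).natDegree = 2 * (N + m) + 2 := by
  unfold Fp
  have h1 : (∏ n, ((X + C (η / 2 - ξ n)) * (X + C (η / 2 + ξ n)))).Monic :=
    monic_prod_of_monic _ _ fun i _ => (monic_X_add_C _).mul (monic_X_add_C _)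
  rw [(((monic_X_add_C _).mul (monic_X_add_C _)).mul h1).natDegree_mul ((monic_X_add_C _).pow _),
    ((monic_X_add_C _).mul (monic_X_add_C _)).natDegree_mul h1,
    (monic_X_add_C _).natDegree_mul (monic_X_add_C _), (monic_X_add_C _).natDegree_pow,
    natDegree_prod_of_monic _ _ (fun i _ => (monic_X_add_C _).mul (monic_X_add_C _))]
  simp only [(monic_X_add_C _).natDegree_mul (monic_X_add_C _), natDegree_X_add_C]
  simp
  ring

lemma Fp_next (N : ℕ) (η : ℂ) (ξ : Fin N → ℂ) (ζ ζ' : ℂ) (m : ℕ) :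
    (Fp N η ξ ζ ζ' m).nextCoeff = ζ + ζ' - η + N * η - m * η := by
  unfold Fp
  have h1 : (∏ n, ((X + C (η / 2 - ξ n)) * (X + C (η / 2 + ξ n)))).Monic :=
    monic_prod_of_monic _ _ fun i _ => (monic_X_add_C _).mul (monic_X_add_C _)
  rw [(((monic_X_add_C _).mul (monic_X_add_C _)).mul h1).nextCoeff_mul ((monic_X_add_C _).pow _),
    ((monic_X_add_C _).mul (monic_X_add_C _)).nextCoeff_mul h1,
    (monic_X_add_C _).nextCoeff_mul (monic_X_add_C _), (monic_X_add_C _).nextCoeff_pow,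
    Monic.nextCoeff_prod _ _ (fun i _ => (monic_X_add_C _).mul (monic_X_add_C _))]
  simp only [(monic_X_add_C _).nextCoeff_mul (monic_X_add_C _), nextCoeff_X_add_C]
  simp
  ring

lemma S_deg (N : ℕ) (η : ℂ) (ξ : Fin N → ℂ) (ζ ζ' : ℂ) (m : ℕ) :
    (oddP (Fp N η ξ ζ ζ' m)).natDegree ≤ N + m := by
  rw [natDegree_le_iff_coeff_eq_zero]
  intro k hk
  rw [oddP_coeff]
  apply coeff_eq_zero_of_natDegree_lt
  rw [Fp_deg]; omega

lemma S_coeff (N : ℕ) (η : ℂ) (ξ : Fin N → ℂ) (ζ ζ' : ℂ) (m : ℕ) :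
    (oddP (Fp N η ξ ζ ζ' m)).coeff (N + m) = ζ + ζ' - η + N * η - m * η := by
  rw [oddP_coeff, ← Fp_next N η ξ ζ ζ' m, nextCoeff_of_natDegree_pos (by rw [Fp_deg]; omega), Fp_deg]
  rfl

/-- coefficient at `ξ_n - η/2` -/
noncomputable def cO (N : ℕ) (η : ℂ) (ξ : Fin N → ℂ) (ζ ζ' : ℂ) (n : Fin N) : ℂ :=
  η * ((ξ n - ζ) * (ξ n - ζ')) * ∏ a ∈ Finset.univ.erase n, ((ξ n - ξ a - η) * (ξ n + ξ a - η))

/-- coefficient at `ξ_n + η/2` -/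
noncomputable def cZ (N : ℕ) (η : ℂ) (ξ : Fin N → ℂ) (ζ ζ' : ℂ) (n : Fin N) : ℂ :=
  η * ((ξ n + ζ) * (ξ n + ζ')) * ∏ a ∈ Finset.univ.erase n, ((ξ n - ξ a + η) * (ξ n + ξ a + η))

lemma S_eval1 (N : ℕ) (η : ℂ) (ξ : Fin N → ℂ) (ζ ζ' : ℂ) (m : ℕ) (n : Fin N) :
    (oddP (Fp N η ξ ζ ζ' m)).eval ((ξ n - η / 2) ^ 2) = cO N η ξ ζ ζ' n * (ξ n ^ 2) ^ m := by
  have : Fp N η ξ ζ ζ' m = (X - C (ξ n - η / 2)) * ((X + C (ζ - η / 2)) * (X + C (ζ' - η / 2))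
    * ((X + C (η / 2 + ξ n)) * ∏ n ∈ Finset.univ.erase n,
        ((X + C (η / 2 - ξ n)) * (X + C (η / 2 + ξ n)))) * (X + C (-(η / 2))) ^ (2 * m)) := by
    unfold Fp
    rw [← Finset.mul_prod_erase _ _ (Finset.mem_univ n)]
    have : (X + C (η / 2 - ξ n)) = (X - C (ξ n - η / 2)) := by
      simp only [C_sub]; ring
    rw [this]; ring
  rw [this, oddP_factor]
  simp only [eval_mul, eval_prod, eval_pow, eval_add, eval_X, eval_C, cO]
  have h3 : ∀ a, (-(ξ n - η / 2) + (η / 2 - ξ a)) * (-(ξ n - η / 2) + (η / 2 + ξ a))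
    = (ξ n - ξ a - η) * (ξ n + ξ a - η) := fun a => by ring
  have h4 : -(ξ n - η / 2) + -(η / 2) = - ξ n := by ring
  simp only [h3, h4, pow_mul, neg_sq]
  ring

lemma S_eval0 (N : ℕ) (η : ℂ) (ξ : Fin N → ℂ) (ζ ζ' : ℂ) (m : ℕ) (n : Fin N) :
    (oddP (Fp N η ξ ζ ζ' m)).eval ((ξ n + η / 2) ^ 2) = cZ N η ξ ζ ζ' n * (ξ n ^ 2) ^ m := by
  have : Fp N η ξ ζ ζ' m = (X - C (-(ξ n + η / 2))) * ((X + C (ζ - η / 2)) * (X + C (ζ' - η / 2))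
    * ((X + C (η / 2 - ξ n)) * ∏ n ∈ Finset.univ.erase n,
        ((X + C (η / 2 - ξ n)) * (X + C (η / 2 + ξ n)))) * (X + C (-(η / 2))) ^ (2 * m)) := by
    unfold Fp
    rw [← Finset.mul_prod_erase _ _ (Finset.mem_univ n)]
    have : (X + C (η / 2 + ξ n)) = (X - C (-(ξ n + η / 2))) := by
      simp only [C_add, C_neg]; ring
    rw [this]; ring
  rw [this, show (ξ n + η / 2) ^ 2 = (-(ξ n + η / 2)) ^ 2 by ring, oddP_factor]
  simp only [eval_mul, eval_prod, eval_pow, eval_add, eval_X, eval_C, cZ]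
  have h3 : ∀ a, (- -(ξ n + η / 2) + (η / 2 - ξ a)) * (- -(ξ n + η / 2) + (η / 2 + ξ a))
    = (ξ n - ξ a + η) * (ξ n + ξ a + η) := fun a => by ring
  have h4 : - -(ξ n + η / 2) + -(η / 2) = ξ n := by ring
  simp only [h3, h4, pow_mul]
  ring

lemma S_eval (N : ℕ) (η : ℂ) (ξ : Fin N → ℂ) (ζ ζ' : ℂ) (m : ℕ) (x : ℂ) (hx : x ≠ 0) :
    Atil N η ξ ζ ζ' x * (x + η / 2) ^ (2 * m) + Atil N η ξ ζ ζ' (-x) * (x - η / 2) ^ (2 * m)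
      = (2 * (-1) ^ N) * (oddP (Fp N η ξ ζ ζ' m)).eval (x ^ 2) := by
  have h := oddP_eval (Fp N η ξ ζ ζ' m) x
  have e1 : ∀ t, (Fp N η ξ ζ ζ' m).eval t = (t - η / 2 + ζ) * (t - η / 2 + ζ') *
      ((-1) ^ N * (aF N η ξ t * dF N η ξ (-t))) * (t - η / 2) ^ (2 * m) := by
    intro t
    have : (-1 : ℂ) ^ N * (aF N η ξ t * dF N η ξ (-t)) =
        ∏ n, ((t + (η / 2 - ξ n)) * (t + (η / 2 + ξ n))) := by
      have h0 : (-1 : ℂ) ^ N = ∏ n : Fin N, (-1 : ℂ) := by simp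
      rw [h0, aF, dF, ← Finset.prod_mul_distrib, ← Finset.prod_mul_distrib]
      exact Finset.prod_congr rfl fun n _ => by ring
    rw [this]
    simp only [Fp, eval_mul, eval_prod, eval_pow, eval_add, eval_X, eval_C]
    ring
  have hN : ((-1 : ℂ) ^ N) * (-1) ^ N = 1 := by rw [← mul_pow]; simp
  rw [e1, e1] at h
  have h4 : (-x - η / 2) ^ (2 * m) = (x + η / 2) ^ (2 * m) := by
    rw [pow_mul, pow_mul]; congr 1; ring
  rw [h4, neg_neg] at h
  have h' : (x - η / 2 + ζ) * (x - η / 2 + ζ') * (aF N η ξ x * dF N η ξ (-x)) * (x - η / 2) ^ (2 * m)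
      - (-x - η / 2 + ζ) * (-x - η / 2 + ζ') * (aF N η ξ (-x) * dF N η ξ x) * (x + η / 2) ^ (2 * m)
      = 2 * x * (-1) ^ N * eval (x ^ 2) (oddP (Fp N η ξ ζ ζ' m)) := by
    linear_combination (-1 : ℂ) ^ N * h
      - ((x - η / 2 + ζ) * (x - η / 2 + ζ') * (aF N η ξ x * dF N η ξ (-x)) * (x - η / 2) ^ (2 * m)
      - (-x - η / 2 + ζ) * (-x - η / 2 + ζ') * (aF N η ξ (-x) * dF N η ξ x)
        * (x + η / 2) ^ (2 * m)) * hN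
  have hx1 : x * x⁻¹ = 1 := mul_inv_cancel₀ hx
  apply mul_left_cancel₀ hx
  unfold Atil
  rw [neg_neg, div_eq_mul_inv _ x, div_eq_mul_inv _ (-x), inv_neg]
  linear_combination h' + ((x - η / 2 + ζ) * (x - η / 2 + ζ') * (aF N η ξ x * dF N η ξ (-x))
      * (x - η / 2) ^ (2 * m)
      - (-x - η / 2 + ζ) * (-x - η / 2 + ζ') * (aF N η ξ (-x) * dF N η ξ x)
        * (x + η / 2) ^ (2 * m)) * hx1

/-- the functional `q ↦ q(ξ_n^{(0)}) + f_n g_n q(ξ_n^{(1)})` -/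
noncomputable def ell (N : ℕ) (η : ℂ) (ξ : Fin N → ℂ) (ζ ζ' : ℂ) (n : Fin N) : ℂ[X] →ₗ[ℂ] ℂ :=
  leval ((ξ n + η / 2) ^ 2) + (fC N η ξ n * gC N ζ ζ' ξ n) • leval ((ξ n - η / 2) ^ 2)

lemma ell_apply (N : ℕ) (η : ℂ) (ξ : Fin N → ℂ) (ζ ζ' : ℂ) (n : Fin N) (q : ℂ[X]) :
    ell N η ξ ζ ζ' n q = q.eval ((ξ n + η / 2) ^ 2)
      + fC N η ξ n * gC N ζ ζ' ξ n * q.eval ((ξ n - η / 2) ^ 2) := by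
  simp [ell]

lemma prod_ne (N : ℕ) (η : ℂ) (ξ : Fin N → ℂ) (hG : GenG N η ξ) (n : Fin N) :
    ∏ a ∈ Finset.univ.erase n, ((ξ n - ξ a - η) * (ξ n + ξ a - η)) ≠ 0 := by
  refine Finset.prod_ne_zero_iff.2 fun a ha => ?_
  have h := hG.2 n a (Finset.ne_of_mem_erase ha).symm
  exact mul_ne_zero (sub_ne_zero.2 h.2.2.2.2.1) (sub_ne_zero.2 h.2.1)

lemma cO_ne (N : ℕ) (η : ℂ) (hη : η ≠ 0) (ξ : Fin N → ℂ) (hG : GenG N η ξ)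
    (ζp ζm : ℂ) (hζ : ∀ n, ξ n ≠ ζp ∧ ξ n ≠ ζm) (n : Fin N) : cO N η ξ ζp ζm n ≠ 0 := by
  unfold cO
  exact mul_ne_zero (mul_ne_zero hη (mul_ne_zero (sub_ne_zero.2 (hζ n).1)
    (sub_ne_zero.2 (hζ n).2))) (prod_ne N η ξ hG n)

lemma fg_eq (N : ℕ) (η : ℂ) (ξ : Fin N → ℂ) (hG : GenG N η ξ)
    (ζp ζm : ℂ) (hζ : ∀ n, ξ n ≠ ζp ∧ ξ n ≠ ζm) (n : Fin N) :
    fC N η ξ n * gC N ζp ζm ξ n * cO N η ξ ζp ζm n = - cZ N η ξ ζp ζm n := by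
  unfold fC gC cO cZ
  rw [Finset.prod_div_distrib]
  have h1 := prod_ne N η ξ hG n
  have h2 := sub_ne_zero.2 (hζ n).1
  have h3 := sub_ne_zero.2 (hζ n).2
  generalize ∏ a ∈ Finset.univ.erase n, ((ξ n - ξ a - η) * (ξ n + ξ a - η)) = A at *
  generalize ∏ a ∈ Finset.univ.erase n, ((ξ n - ξ a + η) * (ξ n + ξ a + η)) = B at *
  field_simp

lemma det_vand_sq {L : ℕ} (u : Fin L → ℂ) :
    (Matrix.vandermonde (fun i => u i ^ 2)).det = Vhat u := by
  rw [Matrix.det_vandermonde]; rfl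

lemma delta_prod (N M : ℕ) (η : ℂ) (hη : η ≠ 0) (ζ ζ' : ℂ) :
    ∏ m : Fin M, (ζ + ζ' - η + N * η - (m : ℕ) * η)
      = η ^ M * ∏ k ∈ Finset.range M, ((ζ + ζ') / η + N - M + k) := by
  rw [← Finset.prod_range_reflect, Finset.prod_range, ← Fin.prod_const, ← Finset.prod_mul_distrib]
  refine Finset.prod_congr rfl fun m _ => ?_
  have : M - 1 - (m : ℕ) = M - (1 + m) := by omega
  rw [this, Nat.cast_sub (by omega)]
  push_cast
  field_simp
  ring

lemma rel (N M : ℕ) (η : ℂ) (hη : η ≠ 0) (ξ : Fin N → ℂ) (hG : GenG N η ξ)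
    (ζp ζm : ℂ) (hζ : ∀ n, ξ n ≠ ζp ∧ ξ n ≠ ζm) (x : Fin M → ℂ) :
    (-1) ^ (N * M) * Vhat x
      * (Matrix.of fun i j : Fin N => ell N η ξ ζp ζm i ((∏ k, (X - C (x k ^ 2))) * X ^ (j : ℕ))).det
      * (η ^ M * ∏ k ∈ Finset.range M, ((ζp + ζm) / η + N - M + k))
    = (Matrix.of fun i m : Fin M => (oddP (Fp N η ξ ζp ζm m)).eval (x i ^ 2)).det
      * (Matrix.of fun i j : Fin N => ell N η ξ ζp ζm i (X ^ (j : ℕ))).det := by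
  rw [← delta_prod N M η hη, ← epsS_eq, ← det_vand_sq]
  refine key0 N M (ell N η ξ ζp ζm) (fun i => x i ^ 2) (fun m => oddP (Fp N η ξ ζp ζm m)) _
    (fun m => S_deg _ _ _ _ _ _) (fun m => S_coeff _ _ _ _ _ _) ?_
  intro i m
  rw [ell_apply, S_eval0, S_eval1]
  linear_combination (ξ i ^ 2) ^ (m : ℕ) * fg_eq N η ξ hG ζp ζm hζ i

lemma comb (N : ℕ) (η : ℂ) (ξ : Fin N → ℂ) :
    Vhat (fun n => ξ n - η / 2) ^ 2
      * ∏ i, ∏ k ∈ Finset.univ.erase i, ((ξ i - ξ k + η) * (ξ i + ξ k))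
    = Vhat ξ ^ 2 * ∏ i, ∏ k ∈ Finset.univ.erase i, ((ξ i - ξ k - η) * (ξ i + ξ k - η)) := by
  have h := fun f : Fin N → Fin N → ℂ => Finset.prod_prod_Ioi_mul_eq_prod_prod_off_diag f
  have hc : ∀ i : Fin N, ({i}ᶜ : Finset (Fin N)) = Finset.univ.erase i := by
    intro i; ext j; simp
  simp only [hc] at h
  rw [← h (fun k i => (ξ i - ξ k + η) * (ξ i + ξ k)),
    ← h (fun k i => (ξ i - ξ k - η) * (ξ i + ξ k - η))]
  unfold Vhat
  simp only [← Finset.prod_pow, ← Finset.prod_mul_distrib]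
  refine Finset.prod_congr rfl fun i _ => Finset.prod_congr rfl fun k _ => ?_
  ring

lemma Vhat_ne {L : ℕ} (u : Fin L → ℂ) (h : ∀ i j, i ≠ j → u i ^ 2 ≠ u j ^ 2) : Vhat u ≠ 0 := by
  rw [← det_vand_sq, Matrix.det_vandermonde_ne_zero_iff]
  intro i j hij
  by_contra hne
  exact h i j hne hij

lemma base (N : ℕ) (η : ℂ) (hη : η ≠ 0) (ξ : Fin N → ℂ) (hG : GenG N η ξ)
    (ζp ζm : ℂ) (hζ : ∀ n, ξ n ≠ ζp ∧ ξ n ≠ ζm) :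
    (Matrix.of fun i j : Fin N => ell N η ξ ζp ζm i (X ^ (j : ℕ))).det
    = Vhat ξ * (Vhat (fun n => ξ n + η / 2) / Vhat (fun n => ξ n - η / 2))
        * (∏ n, ξ n / ((ξ n - ζm) * (ζp - ξ n))) * (2 * η) ^ N
        * ∏ k ∈ Finset.range N, ((ζp + ζm) / η + k) := by
  have h := rel N N η hη ξ hG ζp ζm hζ (fun n => ξ n - η / 2)
  have hV : Vhat ξ ≠ 0 := by
    refine Vhat_ne _ fun i j hij => ?_
    have := hG.2 i j hij
    rw [← sub_ne_zero, sq_sub_sq]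
    exact mul_ne_zero this.1 this.2.2.2.1
  have hV1 : Vhat (fun n => ξ n - η / 2) ≠ 0 := by
    refine Vhat_ne _ fun i j hij => ?_
    have := hG.2 i j hij
    rw [← sub_ne_zero, sq_sub_sq]
    refine mul_ne_zero ?_ ?_
    · rw [show ξ i - η / 2 + (ξ j - η / 2) = ξ i + ξ j - η by ring]
      exact sub_ne_zero.2 this.2.1
    · rw [show ξ i - η / 2 - (ξ j - η / 2) = ξ i - ξ j by ring]
      exact this.2.2.2.1
  have a1 : (Matrix.of fun i j : Fin N => ell N η ξ ζp ζm i
      ((∏ k, (X - C ((ξ k - η / 2) ^ 2))) * X ^ (j : ℕ))).det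
      = (∏ i, ((2 * η) * ξ i * ∏ k ∈ Finset.univ.erase i, ((ξ i - ξ k + η) * (ξ i + ξ k))))
        * Vhat (fun n => ξ n + η / 2) := by
    rw [← det_vand_sq, ← Matrix.det_mul_column]
    congr 1
    ext i j
    rw [Matrix.of_apply, Matrix.of_apply, ell_apply, Matrix.vandermonde_apply]
    simp only [eval_mul, eval_prod, eval_sub, eval_X, eval_C, eval_pow]
    have z : ∏ k, ((ξ i - η / 2) ^ 2 - (ξ k - η / 2) ^ 2) = 0 :=
      Finset.prod_eq_zero (Finset.mem_univ i) (by simp)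
    rw [z, ← Finset.mul_prod_erase _ _ (Finset.mem_univ i)]
    have : ∀ k, (ξ i + η / 2) ^ 2 - (ξ k - η / 2) ^ 2 = (ξ i - ξ k + η) * (ξ i + ξ k) :=
      fun k => by ring
    simp only [this]
    ring
  have a2 : (Matrix.of fun i m : Fin N =>
      (oddP (Fp N η ξ ζp ζm m)).eval ((ξ i - η / 2) ^ 2)).det
      = (∏ i, cO N η ξ ζp ζm i) * Vhat ξ := by
    rw [← det_vand_sq, ← Matrix.det_mul_column]
    congr 1
    ext i j
    rw [Matrix.of_apply, Matrix.of_apply, S_eval1, Matrix.vandermonde_apply]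
  have hcO : ∏ i, cO N η ξ ζp ζm i ≠ 0 :=
    Finset.prod_ne_zero_iff.2 fun i _ => cO_ne N η hη ξ hG ζp ζm hζ i
  rw [a1, a2] at h
  have hc := comb N η ξ
  apply mul_left_cancel₀ (mul_ne_zero hcO hV)
  rw [← h]
  simp only [cO, Finset.prod_mul_distrib, Finset.prod_div_distrib, Finset.prod_const,
    Finset.card_univ, Fintype.card_fin, add_sub_cancel_right] at hc ⊢
  have hm : ∏ n, (ζp - ξ n) = (-1) ^ N * ∏ n, (ξ n - ζp) := by
    have h0 : (-1 : ℂ) ^ N = ∏ n : Fin N, (-1 : ℂ) := by simp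
    rw [h0, ← Finset.prod_mul_distrib]
    exact Finset.prod_congr rfl fun n _ => by ring
  have hp1 : ∏ n, (ξ n - ζp) ≠ 0 := Finset.prod_ne_zero_iff.2 fun i _ => sub_ne_zero.2 (hζ i).1
  have hp2 : ∏ n, (ξ n - ζm) ≠ 0 := Finset.prod_ne_zero_iff.2 fun i _ => sub_ne_zero.2 (hζ i).2
  have hs : ((-1 : ℂ)) ^ (N * N) = (-1) ^ N := by
    rcases Nat.even_or_odd N with hN | hN
    · rw [hN.neg_one_pow, (hN.mul_right N).neg_one_pow]
    · rw [hN.neg_one_pow, (hN.mul hN).neg_one_pow]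
  have hN : ((-1 : ℂ) ^ N) * (-1) ^ N = 1 := by rw [← mul_pow]; simp
  have hN0 : (-1 : ℂ) ^ N ≠ 0 := pow_ne_zero _ (by norm_num)
  rw [hm, hs]
  generalize (-1 : ℂ) ^ N = e at *
  generalize Vhat ξ = V at *
  generalize Vhat (fun n => ξ n - η / 2) = V1 at *
  generalize Vhat (fun n => ξ n + η / 2) = V0 at *
  generalize ∏ n, (ξ n - ζp) = q1 at *
  generalize ∏ n, (ξ n - ζm) = q2 at *
  generalize ∏ k ∈ Finset.range N, ((ζp + ζm) / η + k) = K at *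
  generalize (∏ i, ∏ k ∈ Finset.univ.erase i, (ξ i - ξ k + η)) = r1 at *
  generalize (∏ i, ∏ k ∈ Finset.univ.erase i, (ξ i + ξ k)) = r2 at *
  generalize (∏ i, ∏ k ∈ Finset.univ.erase i, (ξ i - ξ k - η)) = r3 at *
  generalize (∏ i, ∏ k ∈ Finset.univ.erase i, (ξ i + ξ k - η)) = r4 at *
  generalize ∏ i, ξ i = Q at *
  rw [mul_pow]
  have : Q / (q2 * (e * q1)) = Q * e / (q2 * q1) := by
    rw [div_eq_div_iff (by positivity) (by positivity)]
    linear_combination (-Q * q1 * q2) * hN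
  rw [this]
  field_simp
  linear_combination (V0 * K * Q) * hc

lemma Gamma_shift (z : ℂ) (n : ℕ) (hz : ∀ m : ℕ, z ≠ -(m : ℂ)) :
    Complex.Gamma (z + n) = (∏ k ∈ Finset.range n, (z + k)) * Complex.Gamma z := by
  induction n with
  | zero => simp
  | succ n ih =>
    have : z + n ≠ 0 := fun h => hz n (by linear_combination h)
    rw [Finset.prod_range_succ, Nat.cast_succ, ← add_assoc, Complex.Gamma_add_one _ this, ih]
    ring

end Helpers

theorem stmt4 (N : ℕ) (hN : 1 ≤ N) (η : ℂ) (hη : η ≠ 0)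
    (ξ : Fin N → ℂ) (hG : GenG N η ξ)
    (ζp ζm : ℂ) (hζ : ∀ n, ξ n ≠ ζp ∧ ξ n ≠ ζm)
    (nα nβ : ℕ) (αR : Fin nα → ℂ) (βR : Fin nβ → ℂ)
    (hs : ∀ m : ℕ, (ζp + ζm) / η ≠ -(m : ℂ))
    (hs' : ∀ m : ℕ,
      (ζp + ζm) / η + (N : ℂ) - (nα : ℂ) - (nβ : ℂ) ≠ -(m : ℂ))
    (hne : ∀ i, Fin.append αR βR i ≠ 0)
    (hdist : ∀ i j, i ≠ j → (Fin.append αR βR i) ^ 2 ≠ (Fin.append αR βR j) ^ 2)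
    (hnξ : ∀ i n, (Fin.append αR βR i) ^ 2 ≠ (ξ n + η / 2) ^ 2 ∧
                  (Fin.append αR βR i) ^ 2 ≠ (ξ n - η / 2) ^ 2)
    (α β : ℂ → ℂ)
    (hα : α = fun lam => ∏ k, (lam ^ 2 - αR k ^ 2))
    (hβ : β = fun lam => ∏ k, (lam ^ 2 - βR k ^ 2)) :
    Matrix.det (Matrix.of fun i j : Fin N =>
        α (ξ i + η / 2) * β (ξ i + η / 2) * (ξ i + η / 2) ^ (2 * (j : ℕ))
          + fC N η ξ i * gC N ζp ζm ξ i
            * α (ξ i - η / 2) * β (ξ i - η / 2) * (ξ i - η / 2) ^ (2 * (j : ℕ)))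
    = Vhat ξ * (Vhat (fun n => ξ n + η / 2) / Vhat (fun n => ξ n - η / 2))
        * (∏ n, ξ n / ((ξ n - ζm) * (ζp - ξ n)))
        * (2 * η) ^ ((N : ℤ) - (nα : ℤ) - (nβ : ℤ))
        * (Complex.Gamma ((ζp + ζm) / η + (N : ℂ) - (nα : ℂ) - (nβ : ℂ))
            / Complex.Gamma ((ζp + ζm) / η))
        * Afun η (Fin.append αR βR) (Atil N η ξ ζp ζm) := by
  classical
  open Polynomial in
  have hmat : (Matrix.of fun i j : Fin N =>
        α (ξ i + η / 2) * β (ξ i + η / 2) * (ξ i + η / 2) ^ (2 * (j : ℕ))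
          + fC N η ξ i * gC N ζp ζm ξ i
            * α (ξ i - η / 2) * β (ξ i - η / 2) * (ξ i - η / 2) ^ (2 * (j : ℕ)))
      = (Matrix.of fun i j : Fin N => ell N η ξ ζp ζm i
          ((∏ k, (X - C (Fin.append αR βR k ^ 2))) * X ^ (j : ℕ))) := by
    ext i j
    rw [Matrix.of_apply, Matrix.of_apply, ell_apply]
    subst hα hβ
    simp only [eval_mul, eval_prod, eval_sub, eval_X, eval_C, eval_pow, Fin.prod_univ_add,
      Fin.append_left, Fin.append_right, pow_mul]
    ring
  rw [hmat]
  have hr := rel N (nα + nβ) η hη ξ hG ζp ζm hζ (Fin.append αR βR)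
  rw [base N η hη ξ hG ζp ζm hζ] at hr
  have hA : Afun η (Fin.append αR βR) (Atil N η ξ ζp ζm)
      = (2 * (-1) ^ N) ^ (nα + nβ) * (Matrix.of fun i m : Fin (nα + nβ) =>
        (oddP (Fp N η ξ ζp ζm m)).eval (Fin.append αR βR i ^ 2)).det
        / Vhat (Fin.append αR βR) := by
    unfold Afun
    have h1 : (Matrix.of fun i j : Fin (nα + nβ) => Fin.append αR βR i ^ (2 * (j : ℕ)))
        = Matrix.vandermonde (fun i => Fin.append αR βR i ^ 2) := by
      ext i j
      rw [Matrix.of_apply, Matrix.vandermonde_apply, pow_mul]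
    rw [h1, det_vand_sq]
    congr 1
    have h2 := Matrix.det_smul (Matrix.of fun i m : Fin (nα + nβ) =>
        (oddP (Fp N η ξ ζp ζm m)).eval (Fin.append αR βR i ^ 2)) (2 * (-1 : ℂ) ^ N)
    rw [Fintype.card_fin] at h2
    rw [← h2]
    congr 1
    ext i j
    rw [Matrix.of_apply, S_eval _ _ _ _ _ _ _ (hne i)]
    rfl
  rw [hA]
  have hW : Vhat (Fin.append αR βR) ≠ 0 := Vhat_ne _ hdist
  have g1 := Gamma_shift ((ζp + ζm) / η) N hs
  have g2 := Gamma_shift ((ζp + ζm) / η + N - ((nα + nβ : ℕ) : ℂ)) (nα + nβ) (by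
    intro m; have := hs' m; push_cast; rwa [← sub_sub])
  rw [sub_add_cancel] at g2
  have hs2 : (ζp + ζm) / η + (N : ℂ) - (nα : ℂ) - (nβ : ℂ)
      = (ζp + ζm) / η + N - ((nα + nβ : ℕ) : ℂ) := by push_cast; ring
  have hG0 : Complex.Gamma ((ζp + ζm) / η) ≠ 0 := Complex.Gamma_ne_zero hs
  have hK : ∏ k ∈ Finset.range (nα + nβ),
      ((ζp + ζm) / η + N - ((nα + nβ : ℕ) : ℂ) + k) ≠ 0 := by
    refine Finset.prod_ne_zero_iff.2 fun k _ h => hs' k ?_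
    rw [hs2]; linear_combination h
  have hz : (2 * η) ^ ((N : ℤ) - (nα : ℤ) - (nβ : ℤ)) = (2 * η) ^ N / (2 * η) ^ (nα + nβ) := by
    rw [sub_sub, zpow_sub₀ (mul_ne_zero two_ne_zero hη), zpow_natCast]
    congr 1
  rw [hz, hs2]
  rw [g1] at g2
  rw [mul_pow 2 η (nα + nβ), mul_pow 2 ((-1 : ℂ) ^ N), ← pow_mul]
  have hE : ((-1 : ℂ) ^ (N * (nα + nβ))) * (-1) ^ (N * (nα + nβ)) = 1 := by
    rw [← mul_pow]; simp
  have hη' : η ^ (nα + nβ) ≠ 0 := pow_ne_zero _ hη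
  have h2' : (2 : ℂ) ^ (nα + nβ) ≠ 0 := pow_ne_zero _ two_ne_zero
  generalize (-1 : ℂ) ^ (N * (nα + nβ)) = E at *
  generalize Vhat (Fin.append αR βR) = W at *
  generalize η ^ (nα + nβ) = u at *
  generalize (2 : ℂ) ^ (nα + nβ) = t at *
  generalize ∏ k ∈ Finset.range (nα + nβ),
      ((ζp + ζm) / η + N - ((nα + nβ : ℕ) : ℂ) + k) = K at *
  generalize ∏ k ∈ Finset.range N, ((ζp + ζm) / η + k) = H at *
  generalize Complex.Gamma ((ζp + ζm) / η + N - ((nα + nβ : ℕ) : ℂ)) = G1 at *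
  generalize Complex.Gamma ((ζp + ζm) / η) = G2 at *
  generalize Vhat ξ * (Vhat (fun n => ξ n + η / 2) / Vhat (fun n => ξ n - η / 2))
        * (∏ n, ξ n / ((ξ n - ζm) * (ζp - ξ n))) = pref at *
  generalize (2 * η) ^ N = T at *
  generalize Matrix.det (Matrix.of fun i m : Fin (nα + nβ) =>
        (oddP (Fp N η ξ ζp ζm m)).eval (Fin.append αR βR i ^ 2)) = dS at *
  open Polynomial in
  generalize Matrix.det (Matrix.of fun i j : Fin N => ell N η ξ ζp ζm i
          ((∏ k, (X - C (Fin.append αR βR k ^ 2))) * X ^ (j : ℕ))) = D at *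
  have hGG : G1 / G2 = H / K := by
    rw [div_eq_div_iff hG0 hK]; linear_combination -g2
  rw [hGG]
  field_simp
  linear_combination E * hr - D * W * u * K * hE
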